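/- Let m : ℝ² → ℝ be a smooth, nowhere-vanishing function of (x,t) satisfying the KdV equation m_t + m_xxx − 6m·m_x = 0. Let y : ℝ² → ℝ be smooth with y_x(x,t) = m(x,t) and y_t(x,t) = 3m(x,t)² − m_xx(x,t) for all (x,t), and let M : ℝ² → ℝ be a smooth function of (y,T) such that M(y(x,t), t) = m(x,t) for all (x,t). Then the RKdV equation M_T + (M³(M_yy − 1))_y = 0 holds at every point of the form (y(x,t), t). -/

import Mathlib

noncomputable section

/-- Partial derivative of `f` with respect to its first argument. -/
def d1 (f : ℝ → ℝ → ℝ) : ℝ → ℝ → ℝ := fun a b => deriv (fun a' => f a' b) a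

/-- Partial derivative of `f` with respect to its second argument. -/
def d2 (f : ℝ → ℝ → ℝ) : ℝ → ℝ → ℝ := fun a b => deriv (fun b' => f a b') b

/-- Smoothness of a two-variable real function. -/
def Smooth2 (f : ℝ → ℝ → ℝ) : Prop := ContDiff ℝ (⊤ : ℕ∞) (fun p : ℝ × ℝ => f p.1 p.2)

theorem Smooth2.hasF {f : ℝ → ℝ → ℝ} (hf : Smooth2 f) (a b : ℝ) :
    HasFDerivAt (fun p : ℝ × ℝ => f p.1 p.2) (fderiv ℝ (fun p : ℝ × ℝ => f p.1 p.2) (a, b)) (a, b) := by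
  unfold Smooth2 at hf
  exact (hf.differentiable (by simp) (a, b)).hasFDerivAt

theorem Smooth2.has1F {f : ℝ → ℝ → ℝ} (hf : Smooth2 f) (a b : ℝ) :
    HasDerivAt (fun a' => f a' b) (fderiv ℝ (fun p : ℝ × ℝ => f p.1 p.2) (a, b) (1, 0)) a :=
  HasFDerivAt.comp_hasDerivAt (f := fun a' : ℝ => (a', b)) a (hf.hasF a b) ((hasDerivAt_id' a).prodMk (hasDerivAt_const a b))

theorem Smooth2.has2F {f : ℝ → ℝ → ℝ} (hf : Smooth2 f) (a b : ℝ) :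
    HasDerivAt (fun b' => f a b') (fderiv ℝ (fun p : ℝ × ℝ => f p.1 p.2) (a, b) (0, 1)) b :=
  HasFDerivAt.comp_hasDerivAt (f := fun b' : ℝ => (a, b')) b (hf.hasF a b) ((hasDerivAt_const b a).prodMk (hasDerivAt_id' b))

theorem Smooth2.has1 {f : ℝ → ℝ → ℝ} (hf : Smooth2 f) (a b : ℝ) :
    HasDerivAt (fun a' => f a' b) (d1 f a b) a :=
  (hf.has1F a b).differentiableAt.hasDerivAt

theorem Smooth2.has2 {f : ℝ → ℝ → ℝ} (hf : Smooth2 f) (a b : ℝ) :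
    HasDerivAt (fun b' => f a b') (d2 f a b) b :=
  (hf.has2F a b).differentiableAt.hasDerivAt

theorem Smooth2.smooth_d1 {f : ℝ → ℝ → ℝ} (hf : Smooth2 f) : Smooth2 (d1 f) := by
  have h : (fun p : ℝ × ℝ => d1 f p.1 p.2)
      = fun p => fderiv ℝ (fun p : ℝ × ℝ => f p.1 p.2) p (1, 0) := by
    funext p
    exact (hf.has1F p.1 p.2).deriv
  unfold Smooth2
  rw [h]
  unfold Smooth2 at hf
  exact (hf.fderiv_right (m := ((⊤ : ℕ∞) : WithTop ℕ∞)) (by simp)).clm_apply contDiff_const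

/-- Chain rule along `t ↦ (y x t, t)`. -/
theorem Smooth2.chain2 {f y : ℝ → ℝ → ℝ} (hf : Smooth2 f) (hy : Smooth2 y) (x t : ℝ) :
    HasDerivAt (fun t' => f (y x t') t') (d1 f (y x t) t * d2 y x t + d2 f (y x t) t) t := by
  have h := HasFDerivAt.comp_hasDerivAt (f := fun t' : ℝ => (y x t', t')) t (hf.hasF (y x t) t) ((hy.has2 x t).prodMk (hasDerivAt_id' t))
  refine h.congr_deriv ?_
  rw [(hf.has1 (y x t) t).unique (hf.has1F _ _), (hf.has2 (y x t) t).unique (hf.has2F _ _)]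
  have : (d2 y x t, (1 : ℝ)) = d2 y x t • ((1 : ℝ), (0 : ℝ)) + ((0 : ℝ), (1 : ℝ)) := by simp
  rw [this, map_add, map_smul, smul_eq_mul, mul_comm]

theorem Smooth2.chain1 {f y : ℝ → ℝ → ℝ} (hf : Smooth2 f) (hy : Smooth2 y) (x t : ℝ) :
    HasDerivAt (fun x' => f (y x' t) t) (d1 f (y x t) t * d1 y x t) x :=
  HasDerivAt.comp (h₂ := fun a' => f a' t) (h := fun x' => y x' t) x (hf.has1 (y x t) t) (hy.has1 x t)

/-- the reciprocal transformation `dy = m·dx + (3m² − m_xx)dt`, `T = t`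
turns a nowhere-vanishing solution `m` of KdV into a solution `M` of RKdV. -/
theorem reciprocal_KdV_to_RKdV (m y M : ℝ → ℝ → ℝ)
    (hm : Smooth2 m) (hy : Smooth2 y) (hM : Smooth2 M)
    (hne : ∀ x t, m x t ≠ 0)
    (hKdV : ∀ x t, d2 m x t + d1 (d1 (d1 m)) x t - 6 * m x t * d1 m x t = 0)
    (hyx : ∀ x t, d1 y x t = m x t)
    (hyt : ∀ x t, d2 y x t = 3 * (m x t) ^ 2 - d1 (d1 m) x t)
    (hMm : ∀ x t, M (y x t) t = m x t) :
    ∀ x t,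
      d2 M (y x t) t
        + d1 (fun a b => (M a b) ^ 3 * (d1 (d1 M) a b - 1)) (y x t) t = 0 := by
  have hM1 := hM.smooth_d1
  have hM2 := hM1.smooth_d1
  -- `m`, `m_x`, `m_xx`, `m_xxx` in terms of `M`
  have e1 : ∀ x t, d1 m x t = d1 M (y x t) t * M (y x t) t := by
    intro x t
    have h := hM.chain1 hy x t
    simp only [hMm, hyx] at h
    rw [hMm]
    exact (hm.has1 x t).unique h
  have e2 : ∀ x t, d1 (d1 m) x t = d1 (d1 M) (y x t) t * M (y x t) t * M (y x t) t
      + d1 M (y x t) t * (d1 M (y x t) t * M (y x t) t) := by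
    intro x t
    have h := (hM1.chain1 hy x t).mul (hM.chain1 hy x t)
    simp only [hyx, ← hMm] at h
    refine (hm.smooth_d1.has1 x t).unique ?_
    simp only [e1]
    exact h
  have e3 : ∀ x t, d1 (d1 (d1 m)) x t = M (y x t) t * (M (y x t) t ^ 2 * d1 (d1 (d1 M)) (y x t) t
      + 4 * M (y x t) t * d1 M (y x t) t * d1 (d1 M) (y x t) t + d1 M (y x t) t ^ 3) := by
    intro x t
    have h0 := hM.chain1 hy x t
    have h1 := hM1.chain1 hy x t
    have h2 := hM2.chain1 hy x t
    have h := ((h2.mul h0).mul h0).add (h1.mul (h1.mul h0))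
    simp only [hyx, ← hMm] at h
    refine (hm.smooth_d1.smooth_d1.has1 x t).unique ?_
    simp only [e2]
    refine h.congr_deriv ?_
    simp only [Pi.mul_apply]
    ring
  intro x t
  have et : d2 m x t = d1 M (y x t) t * d2 y x t + d2 M (y x t) t := by
    have h := hM.chain2 hy x t
    simp only [hMm] at h
    exact (hm.has2 x t).unique h
  have eR : d1 (fun a b => (M a b) ^ 3 * (d1 (d1 M) a b - 1)) (y x t) t
      = 3 * M (y x t) t ^ 2 * d1 M (y x t) t * (d1 (d1 M) (y x t) t - 1)
        + M (y x t) t ^ 3 * d1 (d1 (d1 M)) (y x t) t := by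
    have h := ((hM.has1 (y x t) t).pow 3).mul ((hM2.has1 (y x t) t).sub_const 1)
    refine Eq.trans h.deriv ?_
    simp
  have k := hKdV x t
  rw [et, hyt, e3, e2, e1, ← hMm x t] at k
  rw [eR]
  linear_combination k
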